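/- Let q, w be nonzero complex numbers with q^m ≠ 1 for all m ≥ 1. Suppose (α_n, β_n) is a Bailey pair with parameters (1, q) in which α_0 = 1 and α_n = (-1)^n w^{n^2} (w^n q^{-n} + w^{-n} q^{n}) for n > 0 (when w = q^A this is α_n = q^{A n^2}(q^{(A-1)n} + q^{-(A-1)n})(-1)^n). Define β'_n = q^n β_n, α'_0 = 1, and α'_n = (-1)^n w^{n^2} (w^n + w^{-n}) for n > 0. Then (α'_n, β'_n) is a Bailey pair with parameters (1, q). -/

import Mathlib

/-- The finite q-Pochhammer symbol `(x;q)_n = ∏_{j=0}^{n-1} (1 - x q^j)`. -/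
noncomputable def qPoch (x q : ℂ) (n : ℕ) : ℂ := ∏ j ∈ Finset.range n, (1 - x * q ^ j)

/-- `(α, β)` is a Bailey pair with parameters `(a, q)`. -/
def IsBaileyPair (a q : ℂ) (α β : ℕ → ℂ) : Prop :=
  ∀ n : ℕ, β n = ∑ r ∈ Finset.range (n + 1), α r / (qPoch q q (n - r) * qPoch (a * q) q (n + r))

/-!
Multiplying `β n` by `q ^ n` acts on the `α`-side through summation by parts. The kernel
`K n r = ((q;q)_{n-r} (aq;q)_{n+r})⁻¹` satisfies
`(1 - a q^{n+r+1}) K n (r+1) = (1 - q^{n-r}) K n r`, so if `α r = a^r q^{r²} (s r - s (r-1))` and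
`α' r = a^r q^{r²+r} s r - a^{r-1} q^{r²-r} s (r-1)`, where `s (-1) = 0`, then
`(α' r - q^n α r) K n r` telescopes, with potential `a^r q^{r²+r} s r (1 - q^{n-r}) K n r`
vanishing at `r = n`. For `a = 1` and the `α` at hand, the partial sums of `q^{-r²} α r` collapse
to `s r = (-1)^r (w/q)^{r²+r}`.
-/

lemma qPoch_succ (x q : ℂ) (n : ℕ) : qPoch x q (n + 1) = qPoch x q n * (1 - x * q ^ n) :=
  Finset.prod_range_succ _ n

/-- The weight of `α r` in `β n` for a Bailey pair with parameters `(a, q)`. It has this meaning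
only for `r ≤ n`: truncated subtraction makes it nonzero for `r > n`, where the weight is `0`. -/
noncomputable def baileyKernel (a q : ℂ) (n r : ℕ) : ℂ :=
  (qPoch q q (n - r) * qPoch (a * q) q (n + r))⁻¹

lemma isBaileyPair_iff_baileyKernel {a q : ℂ} {α β : ℕ → ℂ} :
    IsBaileyPair a q α β ↔
      ∀ n, β n = ∑ r ∈ Finset.range (n + 1), α r * baileyKernel a q n r := by
  simp only [IsBaileyPair, baileyKernel, div_eq_mul_inv]

lemma baileyKernel_succ {a q : ℂ} {n r : ℕ} (hq : q ^ (n - r) ≠ 1)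
    (haq : a * q ^ (n + r + 1) ≠ 1) :
    (1 - a * q ^ (n + r + 1)) * baileyKernel a q n (r + 1) =
      (1 - q ^ (n - r)) * baileyKernel a q n r := by
  have hr : r < n := by
    by_contra! hnr
    exact hq (by rw [Nat.sub_eq_zero_of_le hnr, pow_zero])
  have hleft : qPoch q q (n - r) = qPoch q q (n - (r + 1)) * (1 - q ^ (n - r)) := by
    rw [show n - r = n - (r + 1) + 1 by omega, qPoch_succ, pow_succ']
  have hright : qPoch (a * q) q (n + (r + 1)) =
      qPoch (a * q) q (n + r) * (1 - a * q ^ (n + r + 1)) := by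
    rw [← add_assoc, qPoch_succ, mul_assoc a, ← pow_succ']
  have hq' : 1 - q ^ (n - r) ≠ 0 := sub_ne_zero.mpr hq.symm
  have haq' : 1 - a * q ^ (n + r + 1) ≠ 0 := sub_ne_zero.mpr haq.symm
  rw [baileyKernel, baileyKernel, hleft, hright]
  field_simp

theorem IsBaileyPair.pow_mul_beta {a q : ℂ} (hq : ∀ m : ℕ, 1 ≤ m → q ^ m ≠ 1)
    (haq : ∀ m : ℕ, 1 ≤ m → a * q ^ m ≠ 1) {α α' β s : ℕ → ℂ} (h : IsBaileyPair a q α β)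
    (hα_zero : α 0 = s 0)
    (hα_succ : ∀ n, α (n + 1) = a ^ (n + 1) * q ^ (n + 1) ^ 2 * (s (n + 1) - s n))
    (hα'_zero : α' 0 = s 0)
    (hα'_succ : ∀ n, α' (n + 1) =
      a ^ (n + 1) * q ^ ((n + 1) * (n + 2)) * s (n + 1) - a ^ n * q ^ (n * (n + 1)) * s n) :
    IsBaileyPair a q α' (fun n ↦ q ^ n * β n) := by
  rw [isBaileyPair_iff_baileyKernel] at h ⊢
  intro n
  let potential (r : ℕ) : ℂ :=
    a ^ r * q ^ (r * (r + 1)) * s r * ((1 - q ^ (n - r)) * baileyKernel a q n r)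
  have hzero : (α' 0 - q ^ n * α 0) * baileyKernel a q n 0 = potential 0 := by
    simp only [potential, hα_zero, hα'_zero, pow_zero, zero_mul, Nat.sub_zero]
    ring
  have hsucc (r : ℕ) (hr : r < n) :
      (α' (r + 1) - q ^ n * α (r + 1)) * baileyKernel a q n (r + 1) =
        potential (r + 1) - potential r := by
    simp only [potential, hα_succ, hα'_succ]
    rw [← baileyKernel_succ (n := n) (r := r) (hq _ (by omega)) (haq _ (by omega))]
    obtain ⟨m, rfl⟩ : ∃ m, n = r + 1 + m := Nat.exists_eq_add_of_le hr
    rw [Nat.add_sub_cancel_left]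
    ring
  have hsum : ∑ r ∈ Finset.range (n + 1), (α' r - q ^ n * α r) * baileyKernel a q n r = 0 := by
    calc
      _ = ∑ r ∈ Finset.range n, (potential (r + 1) - potential r) + potential 0 := by
        rw [Finset.sum_range_succ', hzero,
          Finset.sum_congr rfl fun r hr ↦ hsucc r (Finset.mem_range.mp hr)]
      _ = potential n := by rw [Finset.sum_range_sub, sub_add_cancel]
      _ = 0 := by simp [potential]
  simp only [sub_mul, mul_assoc, Finset.sum_sub_distrib, ← Finset.mul_sum, ← h n] at hsum
  exact (sub_eq_zero.mp hsum).symm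

/-- Proposition 4.1, stated with `w = q^A`. -/
theorem bailey_linear_insertion (q w : ℂ) (hq : q ≠ 0) (hw : w ≠ 0)
    (hq1 : ∀ m : ℕ, 1 ≤ m → q ^ m ≠ 1)
    (α β : ℕ → ℂ)
    (hpair : IsBaileyPair 1 q α β)
    (hα0 : α 0 = 1)
    (hα : ∀ n : ℕ, 0 < n →
      α n = (-1) ^ n * w ^ (n ^ 2) * (w ^ n * q ^ (-(n : ℤ)) + w ^ (-(n : ℤ)) * q ^ n)) :
    IsBaileyPair 1 q
      (fun n => if n = 0 then 1 else (-1) ^ n * w ^ (n ^ 2) * (w ^ n + w ^ (-(n : ℤ))))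
      (fun n => q ^ n * β n) := by
  let s (n : ℕ) : ℂ := (-1) ^ n * (w / q) ^ (n * (n + 1))
  have hα_succ (n : ℕ) : α (n + 1) = 1 ^ (n + 1) * q ^ (n + 1) ^ 2 * (s (n + 1) - s n) := by
    simp only [hα (n + 1) n.succ_pos, s, zpow_neg, zpow_natCast, div_pow]
    field_simp
    ring
  have pow_mul_s (n : ℕ) : q ^ (n * (n + 1)) * s n = (-1) ^ n * w ^ (n * (n + 1)) := by
    simp only [s, div_pow]
    field_simp
  refine hpair.pow_mul_beta hq1 (by simpa only [one_mul] using hq1) (s := s) (by simpa [s])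
    hα_succ (by simp [s]) fun n ↦ ?_
  simp only [Nat.add_one_ne_zero, if_false, zpow_neg, zpow_natCast, one_pow, one_mul,
    pow_mul_s n, pow_mul_s (n + 1)]
  field_simp
  ring
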